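/- Let M be a Sidon set in F_2^t with |M| ≥ 3. The following are equivalent: (a) M is maximal Sidon; (b) the 3-sums 3Σ(M) equal all of F_2^t; (c) 3Σ*(M) ∪ M = F_2^t and 3Σ*(M) ∩ M = ∅. -/

import Mathlib

/-- A subset `M` of `𝔽₂ᵗ` is Sidon if `m₁+m₂ ≠ m₃+m₄` for pairwise distinct elements. -/
def IsSidon {t : ℕ} (M : Finset (Fin t → ZMod 2)) : Prop :=
  ∀ m₁ ∈ M, ∀ m₂ ∈ M, ∀ m₃ ∈ M, ∀ m₄ ∈ M,
    (m₁ ≠ m₂ ∧ m₁ ≠ m₃ ∧ m₁ ≠ m₄ ∧ m₂ ≠ m₃ ∧ m₂ ≠ m₄ ∧ m₃ ≠ m₄) →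
    m₁ + m₂ ≠ m₃ + m₄

/-- `M` is sum-free if `m₁+m₂ ≠ m₃` for all `m₁,m₂,m₃ ∈ M`. -/
def IsSumFree {t : ℕ} (M : Finset (Fin t → ZMod 2)) : Prop :=
  ∀ m₁ ∈ M, ∀ m₂ ∈ M, ∀ m₃ ∈ M, m₁ + m₂ ≠ m₃

/-- A maximal Sidon set. -/
def IsMaximalSidon {t : ℕ} (M : Finset (Fin t → ZMod 2)) : Prop :=
  IsSidon M ∧ ∀ S : Finset (Fin t → ZMod 2), IsSidon S → M ⊆ S → S = M

/-- Maximum size of a Sidon set in `𝔽₂ᵗ`. -/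
noncomputable def sMax (t : ℕ) : ℕ :=
  sSup {n : ℕ | ∃ M : Finset (Fin t → ZMod 2), IsSidon M ∧ M.card = n}

/-- 2-sums of `M`. -/
def twoSums {t : ℕ} (M : Finset (Fin t → ZMod 2)) : Finset (Fin t → ZMod 2) :=
  (M ×ˢ M).image fun p => p.1 + p.2

/-- 2-star-sums of `M` (sums of two distinct elements). -/
def twoStarSums {t : ℕ} (M : Finset (Fin t → ZMod 2)) : Finset (Fin t → ZMod 2) :=
  ((M ×ˢ M).filter fun p => p.1 ≠ p.2).image fun p => p.1 + p.2

/-- 3-sums of `M`. -/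
def threeSums {t : ℕ} (M : Finset (Fin t → ZMod 2)) : Finset (Fin t → ZMod 2) :=
  ((M ×ˢ M) ×ˢ M).image fun p => p.1.1 + p.1.2 + p.2

/-- 3-star-sums of `M` (sums of three pairwise distinct elements). -/
def threeStarSums {t : ℕ} (M : Finset (Fin t → ZMod 2)) : Finset (Fin t → ZMod 2) :=
  (((M ×ˢ M) ×ˢ M).filter fun p => p.1.1 ≠ p.1.2 ∧ p.1.1 ≠ p.2 ∧ p.1.2 ≠ p.2).image
    fun p => p.1.1 + p.1.2 + p.2

/-- 4-sums of `M`. -/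
def fourSums {t : ℕ} (M : Finset (Fin t → ZMod 2)) : Finset (Fin t → ZMod 2) :=
  (((M ×ˢ M) ×ˢ M) ×ˢ M).image fun p => p.1.1.1 + p.1.1.2 + p.1.2 + p.2

/-!
In characteristic two a relation `a + b = c + d` says that the four elements sum to zero, so `M` is
Sidon iff `0` is not a sum of four distinct elements of `M`. Moving one of the four to the other
side, this says that no element of `M` is a sum of three distinct elements of `M`. For the same
reason, a Sidon set `M` remains Sidon after adding a point `x ∉ M` iff `x` is not such a triple sum;
hence `M` is maximal Sidon iff `3Σ*(M)` is exactly the complement of `M`. Finally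
`3Σ(M) = 3Σ*(M) ∪ M`, because two equal summands cancel.
-/

open Finset (sum_insert card_insert_of_notMem)
open scoped Pointwise

section StarSums

variable {V : Type*} [AddCommMonoid V] {M N : Set V} {k : ℕ} {a x : V}

/-- The `k`-star-sums `kΣ*(M)` of a possibly infinite set `M` in an additive commutative monoid:
the sums of `k` pairwise distinct elements of `M`. The summands are encoded as a finset of
cardinality `k`. -/
def starSums (k : ℕ) (M : Set V) : Set V :=
  {x | ∃ s : Finset V, ↑s ⊆ M ∧ s.card = k ∧ ∑ y ∈ s, y = x}

theorem starSums_mono (hMN : M ⊆ N) : starSums k M ⊆ starSums k N := by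
  rintro x ⟨s, hsM, hs⟩
  exact ⟨s, hsM.trans hMN, hs⟩

@[simp]
theorem starSums_zero : starSums 0 M = {0} := by
  ext x
  simp [starSums, eq_comm]

theorem mem_starSums_succ :
    x ∈ starSums (k + 1) M ↔ ∃ a ∈ M, ∃ y ∈ starSums k (M \ {a}), a + y = x := by
  classical
  constructor
  · rintro ⟨s, hsM, hcard, rfl⟩
    obtain ⟨a, s, has, rfl, hs⟩ := Finset.card_eq_succ.mp hcard
    rw [Finset.coe_insert, Set.insert_subset_iff] at hsM
    exact ⟨a, hsM.1, _, ⟨s, Set.subset_sdiff_singleton hsM.2 has, hs, rfl⟩,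
      (sum_insert (f := id) has).symm⟩
  · rintro ⟨a, haM, _, ⟨s, hsM, hs, rfl⟩, rfl⟩
    have has : a ∉ s := fun has => (hsM has).2 rfl
    refine ⟨insert a s, ?_, by rw [card_insert_of_notMem has, hs], sum_insert has⟩
    rw [Finset.coe_insert]
    exact Set.insert_subset haM (hsM.trans Set.sdiff_subset)

theorem mem_starSums_succ_insert (ha : a ∉ M) :
    x ∈ starSums (k + 1) (insert a M) ↔
      x ∈ starSums (k + 1) M ∨ ∃ y ∈ starSums k M, a + y = x := by
  classical
  have hdiff : insert a M \ {a} = M := Set.insert_sdiff_self_of_notMem ha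
  constructor
  · rintro ⟨s, hsM, hcard, rfl⟩
    by_cases has : a ∈ s
    · refine .inr ⟨_, ⟨s.erase a, ?_, by simp [has, hcard], rfl⟩, s.add_sum_erase id has⟩
      rw [Finset.coe_erase, ← hdiff]
      exact Set.sdiff_subset_sdiff_left hsM
    · exact .inl ⟨s, (Set.subset_insert_iff_of_notMem has).mp hsM, hcard, rfl⟩
  · rintro (hx | ⟨y, hy, rfl⟩)
    · exact starSums_mono (Set.subset_insert a M) hx
    · exact mem_starSums_succ.mpr ⟨a, Set.mem_insert a M, y, hdiff.symm ▸ hy, rfl⟩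

theorem mem_starSums_three :
    x ∈ starSums 3 M ↔
      ∃ a ∈ M, ∃ b ∈ M, ∃ c ∈ M, (a ≠ b ∧ a ≠ c ∧ b ≠ c) ∧ a + b + c = x := by
  simp only [mem_starSums_succ, starSums_zero, add_assoc]
  constructor
  · rintro ⟨a, ha, _, ⟨b, ⟨hb, hba⟩, _, ⟨c, ⟨⟨hc, hca⟩, hcb⟩, _, rfl, rfl⟩, rfl⟩, rfl⟩
    exact ⟨a, ha, b, hb, c, hc, ⟨Ne.symm hba, Ne.symm hca, Ne.symm hcb⟩, by rw [add_zero]⟩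
  · rintro ⟨a, ha, b, hb, c, hc, ⟨hab, hac, hbc⟩, rfl⟩
    exact ⟨a, ha, _, ⟨b, ⟨hb, hab.symm⟩, _,
      ⟨c, ⟨⟨hc, hac.symm⟩, hbc.symm⟩, _, rfl, add_zero c⟩, rfl⟩, rfl⟩

end StarSums

section SidonSet

variable {V : Type*} [Add V] {M N : Set V}

/-- Sidon sets in a vector space over `𝔽₂`, as possibly infinite sets. Only relations between four
pairwise distinct elements are excluded, as `a + a = b + b` always holds in characteristic two;
without characteristic two this is weaker than the usual Sidon property. -/
def IsSidonSet (M : Set V) : Prop :=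
  ∀ m₁ ∈ M, ∀ m₂ ∈ M, ∀ m₃ ∈ M, ∀ m₄ ∈ M,
    (m₁ ≠ m₂ ∧ m₁ ≠ m₃ ∧ m₁ ≠ m₄ ∧ m₂ ≠ m₃ ∧ m₂ ≠ m₄ ∧ m₃ ≠ m₄) →
    m₁ + m₂ ≠ m₃ + m₄

theorem IsSidonSet.anti (hN : IsSidonSet N) (hMN : M ⊆ N) : IsSidonSet M :=
  fun a ha b hb c hc d hd => hN a (hMN ha) b (hMN hb) c (hMN hc) d (hMN hd)

end SidonSet

section CharacteristicTwo

variable {V : Type*} [AddCommGroup V] [Module (ZMod 2) V] {M : Set V} {a x y : V}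

theorem add_eq_zero_iff_eq_of_zmod_two : x + y = 0 ↔ x = y := by
  rw [← ZModModule.sub_eq_add, sub_eq_zero]

theorem zero_notMem_starSums_two : (0 : V) ∉ starSums 2 M := by
  simp only [mem_starSums_succ, starSums_zero]
  rintro ⟨a, -, _, ⟨b, hb, _, rfl, rfl⟩, hab⟩
  rw [add_zero, add_eq_zero_iff_eq_of_zmod_two] at hab
  exact hb.2 hab.symm

theorem isSidonSet_iff_zero_notMem_starSums_four : IsSidonSet M ↔ 0 ∉ starSums 4 M := by
  have hsum (a b c d : V) : a + (b + c + d) = 0 ↔ a + b = c + d := by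
    rw [add_assoc, ← add_assoc, add_eq_zero_iff_eq_of_zmod_two]
  simp only [mem_starSums_succ (k := 3), mem_starSums_three, IsSidonSet, not_exists, not_and]
  constructor
  · rintro hM a ha _ ⟨b, ⟨hb, hba⟩, c, ⟨hc, hca⟩, d, ⟨hd, hda⟩, ⟨hbc, hbd, hcd⟩, rfl⟩
    rw [hsum]
    exact hM a ha b hb c hc d hd ⟨Ne.symm hba, Ne.symm hca, Ne.symm hda, hbc, hbd, hcd⟩
  · rintro hM a ha b hb c hc d hd ⟨hab, hac, had, hbc, hbd, hcd⟩
    rw [ne_eq, ← hsum]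
    exact hM a ha _ ⟨b, ⟨hb, hab.symm⟩, c, ⟨hc, hac.symm⟩, d, ⟨hd, had.symm⟩,
      ⟨hbc, hbd, hcd⟩, rfl⟩

theorem isSidonSet_insert_iff (hx : x ∉ M) :
    IsSidonSet (insert x M) ↔ IsSidonSet M ∧ x ∉ starSums 3 M := by
  simp [isSidonSet_iff_zero_notMem_starSums_four, mem_starSums_succ_insert hx,
    add_eq_zero_iff_eq_of_zmod_two]

theorem mem_starSums_three_sdiff_singleton_self :
    a ∈ starSums 3 (M \ {a}) ↔ a ∈ starSums 3 M := by
  by_cases haM : a ∈ M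
  · have hinsert := mem_starSums_succ_insert (k := 2) (x := a)
      (show a ∉ M \ {a} from fun h => h.2 rfl)
    rw [Set.insert_sdiff_self_of_mem haM] at hinsert
    simp [hinsert, zero_notMem_starSums_two]
  · rw [Set.sdiff_singleton_eq_self haM]

theorem isSidonSet_iff_disjoint_starSums_three : IsSidonSet M ↔ Disjoint (starSums 3 M) M := by
  rw [isSidonSet_iff_zero_notMem_starSums_four, mem_starSums_succ, Set.disjoint_right]
  simp [add_eq_zero_iff_eq_of_zmod_two, mem_starSums_three_sdiff_singleton_self]

theorem add_add_eq_starSums_three_union : M + M + M = starSums 3 M ∪ M := by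
  ext x
  simp only [Set.mem_union, mem_starSums_three, Set.mem_add]
  constructor
  · rintro ⟨_, ⟨a, ha, b, hb, rfl⟩, c, hc, rfl⟩
    rcases eq_or_ne a b with rfl | hab
    · exact .inr (by rwa [ZModModule.add_self, zero_add])
    rcases eq_or_ne a c with rfl | hac
    · exact .inr (by rwa [add_right_comm, ZModModule.add_self, zero_add])
    rcases eq_or_ne b c with rfl | hbc
    · exact .inr (by rwa [add_assoc, ZModModule.add_self, add_zero])
    exact .inl ⟨a, ha, b, hb, c, hc, ⟨hab, hac, hbc⟩, rfl⟩
  · rintro (⟨a, ha, b, hb, c, hc, -, rfl⟩ | hx)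
    · exact ⟨_, ⟨a, ha, b, hb, rfl⟩, c, hc, rfl⟩
    · exact ⟨_, ⟨x, hx, x, hx, rfl⟩, x, hx, by rw [ZModModule.add_self, zero_add]⟩

theorem maximal_isSidonSet_iff_starSums_three :
    Maximal IsSidonSet M ↔ starSums 3 M ∪ M = Set.univ ∧ Disjoint (starSums 3 M) M := by
  rw [Set.maximal_iff_forall_insert fun _ _ => IsSidonSet.anti,
    ← isSidonSet_iff_disjoint_starSums_three, and_comm, and_congr_left_iff]
  intro hM
  have hinsert (x : V) (hx : x ∉ M) : ¬IsSidonSet (insert x M) ↔ x ∈ starSums 3 M := by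
    simp [isSidonSet_insert_iff hx, hM]
  simp +contextual [Set.eq_univ_iff_forall, hinsert, or_iff_not_imp_right]

end CharacteristicTwo

theorem maximal_sidon_characterisation_general {V : Type*} [AddCommGroup V]
    [Module (ZMod 2) V] {M : Set V} (hM : IsSidonSet M) :
    (Maximal IsSidonSet M ↔ M + M + M = Set.univ) ∧
    (Maximal IsSidonSet M ↔
      (starSums 3 M ∪ M = Set.univ ∧ Disjoint (starSums 3 M) M)) := by
  refine ⟨?_, maximal_isSidonSet_iff_starSums_three⟩
  rw [maximal_isSidonSet_iff_starSums_three, ← isSidonSet_iff_disjoint_starSums_three,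
    add_add_eq_starSums_three_union, and_iff_left hM]

section Coe

variable {t : ℕ} (M : Finset (Fin t → ZMod 2))

theorem coe_threeSums : (threeSums M : Set (Fin t → ZMod 2)) = ↑M + ↑M + ↑M := by
  ext x
  simp [threeSums, Set.mem_add, and_assoc]

theorem coe_threeStarSums : (threeStarSums M : Set (Fin t → ZMod 2)) = starSums 3 ↑M := by
  ext x
  simp [threeStarSums, mem_starSums_three, and_assoc]

theorem isSidonSet_coe : IsSidonSet (M : Set (Fin t → ZMod 2)) ↔ IsSidon M :=
  Iff.rfl

theorem maximal_isSidonSet_coe :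
    Maximal IsSidonSet (M : Set (Fin t → ZMod 2)) ↔ IsMaximalSidon M := by
  constructor
  · intro hM
    refine ⟨hM.prop, fun S hS hMS => ?_⟩
    exact_mod_cast (hM.eq_of_subset ((isSidonSet_coe S).mpr hS) (Finset.coe_subset.mpr hMS)).symm
  · rintro ⟨hM, hmax⟩
    refine ⟨hM, fun S hS hMS => ?_⟩
    lift S to Finset (Fin t → ZMod 2) using S.toFinite
    exact (congrArg _ (hmax S hS (Finset.coe_subset.mp hMS))).le

end Coe

theorem maximal_sidon_characterisation {t : ℕ} (M : Finset (Fin t → ZMod 2))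
    (hM : IsSidon M) (hcard : 3 ≤ M.card) :
    (IsMaximalSidon M ↔ threeSums M = Finset.univ) ∧
    (IsMaximalSidon M ↔
      (threeStarSums M ∪ M = Finset.univ ∧ Disjoint (threeStarSums M) M)) := by
  simpa only [maximal_isSidonSet_coe, ← coe_threeSums, ← coe_threeStarSums, ← Finset.coe_union,
    Finset.coe_eq_univ, Finset.disjoint_coe] using
    maximal_sidon_characterisation_general ((isSidonSet_coe M).mpr hM)
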